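/- arXiv:2309.08287 — 2 statements merged into one kernel-verified Lean document; each statement's English description precedes it below -/
import Mathlib

section
/- Let $\beta \ge r$ be positive integers and let $Q_0, Q_1, \dots, Q_r$ be the polynomials satisfying $Q_0 \equiv 1$ and $\frac{\mathrm{d}^i}{\mathrm{d}z^i}(1-z^2)^\beta = (1-z^2)^{\beta-i} Q_i(z)$ on $(-1,1)$. Then for each $i \in \{1,\dots,r\}$, $\sup_{z \in [-1,1]} |Q_i(z)| \le \prod_{n=0}^{i-1} \big(n^2 + 2(\beta - n)\big)$. -/
/-!
Writing `(1 - z²)^β = (-1)^β (z - 1)^β (z + 1)^β`, the Leibniz rule gives the closed form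
`Qᵢ(z) = (-1)^i ∑ₖ C(i,k) (β)_{i-k} (β)_k (z - 1)^k (z + 1)^{i-k}`
(`bubble_eval_eq`), where `(β)_k` is the falling factorial. On `[-1, 1]` the weights
`C(i,k) |z - 1|^k |z + 1|^{i-k}` sum to `2^i`, so `|Qᵢ|` is at most `2^i` times the largest product
of falling factorials (`abs_sum_weights_le`). For `i ≥ 3` one of `k`, `i - k` is at least `2`, so
this product is at most `β^{i-1} (β - 1)`, and `2^i β^{i-1} (β - 1) ≤ (2β)^{i-1} (2β - 1)`. The
latter is below the claimed product, whose factors `n² + 2(β - n)` are all at least `2β`, except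
that the factor for `n = 1` equals `2β - 1`. The cases `i = 1, 2` follow directly from the closed
form. This makes the Markov brothers' inequality unnecessary.
-/

open Polynomial in
/-- Closed form of `Qᵢ` obtained from the Leibniz rule applied to `(z - 1)^β (z + 1)^β`. -/
lemma bubble_eval_eq (β i : ℕ) (hi : i ≤ β) (q : Polynomial ℝ)
    (hq : ∀ z ∈ Set.Ioo (-1 : ℝ) 1,
      iteratedDeriv i (fun t : ℝ => (1 - t ^ 2) ^ β) z = (1 - z ^ 2) ^ (β - i) * q.eval z)
    (z : ℝ) :
    q.eval z = (-1) ^ i * ∑ k ∈ Finset.range (i + 1), (i.choose k : ℝ) *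
      ((β.descFactorial (i - k) : ℝ) * (β.descFactorial k : ℝ)) *
        ((z - 1) ^ k * (z + 1) ^ (i - k)) := by
  set p : ℝ[X] := C ((-1) ^ i) * ∑ k ∈ Finset.range (i + 1), C (i.choose k : ℝ) *
      (C (β.descFactorial (i - k) : ℝ) * C (β.descFactorial k : ℝ)) *
        ((X - C 1) ^ k * (X + C 1) ^ (i - k)) with hp
  have hder : ∀ (j : ℕ) (f : ℝ[X]) (x : ℝ),
      iteratedDeriv j (fun t : ℝ => f.eval t) x = (derivative^[j] f).eval x := by
    intro j
    induction j with
    | zero => intro f x; simp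
    | succ j ih =>
      intro f x
      rw [iteratedDeriv_succ']
      have : deriv (fun t : ℝ => f.eval t) = fun t => (derivative f).eval t := by
        funext t; exact f.deriv
      rw [this, ih, Function.iterate_succ_apply]
  have hqp : q = p := by
    refine eq_of_infinite_eval_eq q p ((Set.Ioo_infinite (by norm_num : (-1 : ℝ) < 1)).mono ?_)
    intro x hx
    have hpos : (0 : ℝ) < 1 - x ^ 2 := by nlinarith [hx.1, hx.2]
    have h := hq x hx
    have hf : (fun t : ℝ => (1 - t ^ 2) ^ β)
        = fun t => (C ((-1) ^ β) * ((X - C 1) ^ β * (X + C 1) ^ β) : ℝ[X]).eval t := by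
      funext t
      simp only [eval_mul, eval_C, eval_pow, eval_sub, eval_add, eval_X]
      rw [← mul_pow, ← mul_pow]
      congr 1
      ring
    rw [hf, hder, iterate_derivative_C_mul, iterate_derivative_mul] at h
    refine mul_left_cancel₀ (pow_pos hpos (β - i)).ne' (h.symm.trans ?_)
    rw [hp]
    simp only [eval_mul, eval_C, eval_finsetSum, Finset.mul_sum]
    refine Finset.sum_congr rfl fun k hk => ?_
    have hk : k ≤ i := Nat.lt_succ_iff.mp (Finset.mem_range.mp hk)
    rw [iterate_derivative_X_sub_pow, iterate_derivative_X_add_pow]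
    simp only [eval_mul, eval_C, eval_pow, eval_sub, eval_add, eval_X, nsmul_eq_mul,
      eval_natCast]
    rw [show β - (i - k) = (β - i) + k by omega, show β - k = (β - i) + (i - k) by omega,
      pow_add, pow_add,
      show (1 - x ^ 2) = (-1) * ((x - 1) * (x + 1)) by ring, mul_pow, mul_pow]
    have hs : ((-1 : ℝ)) ^ β = (-1) ^ (β - i) * (-1) ^ i := by
      rw [← pow_add]; congr 1; omega
    rw [hs]
    ring
  rw [hqp, hp]
  simp [eval_finsetSum]

/-- The weights `C(i,k) |z - 1|^k |z + 1|^{i-k}` sum to `2^i` on `[-1, 1]`, so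
coefficients bounded by `M` give a sum bounded by `2^i M`. -/
lemma abs_sum_weights_le (i : ℕ) (a : ℕ → ℝ) (M : ℝ) (ha : ∀ k ≤ i, |a k| ≤ M) (z : ℝ)
    (hz : z ∈ Set.Icc (-1 : ℝ) 1) :
    |∑ k ∈ Finset.range (i + 1), (i.choose k : ℝ) * a k * ((z - 1) ^ k * (z + 1) ^ (i - k))|
      ≤ 2 ^ i * M := by
  have h2 : ∑ k ∈ Finset.range (i + 1), (i.choose k : ℝ) * M * ((1 - z) ^ k * (z + 1) ^ (i - k))
      = 2 ^ i * M := by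
    have := add_pow (1 - z) (z + 1) i
    rw [show (1 - z) + (z + 1) = 2 by ring] at this
    rw [this, Finset.sum_mul]
    exact Finset.sum_congr rfl fun k _ => by ring
  rw [← h2]
  refine (Finset.abs_sum_le_sum_abs _ _).trans (Finset.sum_le_sum fun k hk => ?_)
  have hk : k ≤ i := Nat.lt_succ_iff.mp (Finset.mem_range.mp hk)
  have h1 : |z - 1| = 1 - z := by rw [abs_sub_comm, abs_of_nonneg (by linarith [hz.2])]
  have h3 : |z + 1| = z + 1 := abs_of_nonneg (by linarith [hz.1])
  rw [abs_mul, abs_mul, abs_mul, abs_pow, abs_pow, h1, h3, Nat.abs_cast]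
  have h4 : 0 ≤ 1 - z := by linarith [hz.2]
  have h5 : 0 ≤ z + 1 := by linarith [hz.1]
  have := ha k hk
  gcongr

lemma descFactorial_le_of_two_le (β j : ℕ) (hj : 2 ≤ j) :
    β.descFactorial j ≤ β ^ (j - 1) * (β - 1) := by
  obtain ⟨m, rfl⟩ := Nat.exists_eq_add_of_le' hj
  induction m with
  | zero => simp [Nat.descFactorial_succ, mul_comm]
  | succ m ih =>
    rw [Nat.descFactorial_succ]
    calc (β - (m + 2)) * β.descFactorial (m + 2)
        ≤ β * (β ^ (m + 2 - 1) * (β - 1)) := Nat.mul_le_mul (Nat.sub_le _ _) (ih (by omega))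
      _ = β ^ (m + 1 + 2 - 1) * (β - 1) := by
        rw [show m + 2 - 1 = m + 1 by omega, show m + 1 + 2 - 1 = m + 2 by omega]; ring

lemma descFactorial_mul_le (β i k : ℕ) (hi : 3 ≤ i) (hk : k ≤ i) :
    β.descFactorial (i - k) * β.descFactorial k ≤ β ^ (i - 1) * (β - 1) := by
  rcases le_or_gt 2 k with h | h
  · calc _ ≤ β ^ (i - k) * (β ^ (k - 1) * (β - 1)) :=
          Nat.mul_le_mul (Nat.descFactorial_le_pow _ _) (descFactorial_le_of_two_le β k h)
      _ = _ := by rw [← mul_assoc, ← pow_add]; congr 2; omega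
  · calc _ ≤ (β ^ (i - k - 1) * (β - 1)) * β ^ k :=
          Nat.mul_le_mul (descFactorial_le_of_two_le β (i - k) (by omega))
            (Nat.descFactorial_le_pow _ _)
      _ = _ := by rw [mul_right_comm, ← pow_add]; congr 2; omega

/-- Every factor `n² + 2(β - n)` with `n ≠ 1` is at least `2β`; the one with `n = 1` is `2β - 1`. -/
lemma le_prod_factors (β m : ℕ) (hβ : 1 ≤ β) :
    (2 * (β : ℝ)) ^ (m + 1) * (2 * β - 1)
      ≤ ∏ n ∈ Finset.range (m + 2), ((n : ℝ) ^ 2 + 2 * ((β : ℝ) - n)) := by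
  have hb : (1 : ℝ) ≤ β := by exact_mod_cast hβ
  induction m with
  | zero =>
    norm_num [Finset.prod_range_succ]
    nlinarith
  | succ m ih =>
    rw [Finset.prod_range_succ, pow_succ, mul_right_comm]
    have hnn : 0 ≤ (2 * (β : ℝ)) ^ (m + 1) * (2 * β - 1) :=
      mul_nonneg (by positivity) (by linarith)
    refine mul_le_mul ih ?_ (by positivity) (hnn.trans ih)
    push_cast
    nlinarith [(Nat.cast_nonneg m : (0 : ℝ) ≤ m)]

/-- Bound on the polynomials `Qᵢ` appearing in the derivatives of the bubble factor:
`sup_{z ∈ [-1,1]} |Qᵢ(z)| ≤ ∏_{n=0}^{i-1} (n² + 2(β - n))`. -/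
theorem stmt9 (β r : ℕ) (hr : 1 ≤ r) (hβr : r ≤ β) (Q : ℕ → Polynomial ℝ)
    (hQ0 : Q 0 = 1)
    (hQ : ∀ i ≤ r, ∀ z ∈ Set.Ioo (-1 : ℝ) 1,
      iteratedDeriv i (fun t : ℝ => (1 - t ^ 2) ^ β) z
        = (1 - z ^ 2) ^ (β - i) * (Q i).eval z) :
    ∀ i, 1 ≤ i → i ≤ r → ∀ z ∈ Set.Icc (-1 : ℝ) 1,
      |(Q i).eval z| ≤ ∏ n ∈ Finset.range i, ((n : ℝ) ^ 2 + 2 * ((β : ℝ) - n)) := by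
  intro i hi hir z hz
  have hβ : 1 ≤ β := hr.trans hβr
  have hb : (1 : ℝ) ≤ β := by exact_mod_cast hβ
  have hzz : z ^ 2 ≤ 1 := by nlinarith [hz.1, hz.2]
  rw [bubble_eval_eq β i (hir.trans hβr) (Q i) (hQ i hir) z]
  rcases lt_or_ge i 3 with h3 | h3
  · interval_cases i
    · norm_num [Finset.sum_range_succ]
      rw [abs_le]
      constructor <;> nlinarith [hz.1, hz.2]
    · norm_num [Finset.sum_range_succ, Finset.prod_range_succ, Nat.descFactorial_succ,
        Nat.cast_sub hβ]
      rw [abs_le]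
      constructor <;> nlinarith [mul_nonneg (sub_nonneg.2 hb) (sub_nonneg.2 hzz),
        mul_nonneg (mul_nonneg (sub_nonneg.2 hb) (sub_nonneg.2 hb)) (sub_nonneg.2 hzz),
        mul_nonneg (sub_nonneg.2 hb) (sq_nonneg z),
        mul_nonneg (mul_nonneg (sub_nonneg.2 hb) (sub_nonneg.2 hb)) (sq_nonneg z)]
  · rw [abs_mul, abs_pow, abs_neg, abs_one, one_pow, one_mul]
    obtain ⟨m, rfl⟩ : ∃ m, i = m + 2 := ⟨i - 2, by omega⟩
    refine (abs_sum_weights_le (m + 2)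
      (fun k => (β.descFactorial (m + 2 - k) : ℝ) * (β.descFactorial k : ℝ))
      ((β : ℝ) ^ (m + 1) * (β - 1)) ?_ z hz).trans (le_trans ?_ (le_prod_factors β m hβ))
    · intro k hk
      rw [abs_of_nonneg (by positivity)]
      have := descFactorial_mul_le β (m + 2) k h3 hk
      rw [show m + 2 - 1 = m + 1 by omega] at this
      have h' : ((β.descFactorial (m + 2 - k) * β.descFactorial k : ℕ) : ℝ)
          ≤ ((β ^ (m + 1) * (β - 1) : ℕ) : ℝ) := by exact_mod_cast this
      push_cast [Nat.cast_sub hβ] at h'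
      exact h'
    · have : (0 : ℝ) ≤ (2 * (β : ℝ)) ^ (m + 1) := by positivity
      calc (2 : ℝ) ^ (m + 2) * ((β : ℝ) ^ (m + 1) * (β - 1))
          = (2 * (β : ℝ)) ^ (m + 1) * (2 * β - 2) := by rw [mul_pow]; ring
        _ ≤ (2 * (β : ℝ)) ^ (m + 1) * (2 * β - 1) := by gcongr; norm_num
end

section
/- Let $L > 0$, let $r \ge 1$ be an integer, and let $P_1, \dots, P_r$ be the polynomials satisfying $P_1 \equiv 1$ and $\frac{\mathrm{d}^\ell}{\mathrm{d}z^\ell}\big(L^{-1}\operatorname{arctanh}(z)\big) = L^{-1}(1-z^2)^{-\ell} P_\ell(z)$ on $(-1,1)$. Then for each $\ell \in \{1,\dots,r\}$, $\sup_{z \in [-1,1]} |P_\ell(z)| \le \prod_{n=0}^{\ell-1} (n^2 + 1)$. -/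
/-!
The argument uses a closed form and avoids Markov's inequality. The partial fraction decomposition
`2 / (1 - z²) = 1 / (1 + z) + 1 / (1 - z)` can be differentiated any number of times, giving
`P_{n+1}(z) = (n! / 2) ((-1)ⁿ (1 - z)ⁿ⁺¹ + (1 + z)ⁿ⁺¹)` on `(-1, 1)`. Since `1 - z` and `1 + z` are
nonnegative with sum `2`, the `(n+1)`-st powers add up to at most `2ⁿ⁺¹`, so
`|P_{n+1}(z)| ≤ n! 2ⁿ = ∏_{1 ≤ k ≤ n} 2k ≤ ∏_{k ≤ n} (k² + 1)`, the last step by `2k ≤ k² + 1`.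
Continuity extends the bound to `[-1, 1]`.
-/

/-- The inverse hyperbolic tangent, `arctanh z = (1/2) log((1+z)/(1-z))`. -/
noncomputable def arctanh (z : ℝ) : ℝ := (1 / 2) * Real.log ((1 + z) / (1 - z))

/-- The `(n+1)`-st derivative of `L⁻¹ arctanh`, by partial fractions. -/
lemma iteratedDeriv_arctanh (L : ℝ) (n : ℕ) : ∀ z ∈ Set.Ioo (-1 : ℝ) 1,
    iteratedDeriv (n + 1) (fun t : ℝ => L⁻¹ * arctanh t) z
      = L⁻¹ * (n.factorial / 2 *
        ((-1) ^ n * ((1 + z) ^ (n + 1))⁻¹ + ((1 - z) ^ (n + 1))⁻¹)) := by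
  induction n with
  | zero =>
    rintro z ⟨hz1, hz2⟩
    have h1 : 1 + z ≠ 0 := by linarith
    have h2 : 1 - z ≠ 0 := by linarith
    have hd : HasDerivAt (fun t : ℝ => L⁻¹ * arctanh t) _ z :=
      (((((hasDerivAt_id z).const_add 1).div ((hasDerivAt_id z).const_sub 1) h2).log
        (div_ne_zero h1 h2)).const_mul (1 / 2)).const_mul L⁻¹
    rw [zero_add, iteratedDeriv_one, hd.deriv]
    simp
    left
    field_simp
    ring
  | succ n ih =>
    rintro z hz
    have hev : iteratedDeriv (n + 1) (fun t : ℝ => L⁻¹ * arctanh t) =ᶠ[nhds z] _ :=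
      Filter.eventually_of_mem (isOpen_Ioo.mem_nhds hz) ih
    rw [iteratedDeriv_succ, hev.deriv_eq]
    obtain ⟨hz1, hz2⟩ := hz
    have h1 : 1 + z ≠ 0 := by linarith
    have h2 : 1 - z ≠ 0 := by linarith
    have hd := ((((((hasDerivAt_id z).const_add 1).pow (n + 1)).inv
        (pow_ne_zero _ h1)).const_mul ((-1) ^ n)).add
      ((((hasDerivAt_id z).const_sub 1).pow (n + 1)).inv (pow_ne_zero _ h2))).const_mul
      ((n.factorial : ℝ) / 2) |>.const_mul L⁻¹
    refine hd.deriv.trans ?_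
    simp [Nat.factorial_succ]
    left
    field_simp
    ring

lemma factorial_mul_two_pow_le (n : ℕ) :
    (n.factorial : ℝ) * 2 ^ n ≤ ∏ k ∈ Finset.range (n + 1), ((k : ℝ) ^ 2 + 1) := by
  induction n with
  | zero => simp
  | succ n ih =>
    rw [Finset.prod_range_succ, Nat.factorial_succ]
    calc (((n + 1) * n.factorial : ℕ) : ℝ) * 2 ^ (n + 1)
        = (n.factorial * 2 ^ n) * (2 * (n + 1)) := by push_cast; ring
      _ ≤ _ := by
        gcongr
        push_cast
        nlinarith [sq_nonneg (n : ℝ)]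


/-- Bound on the polynomials `P_ℓ` appearing in the derivatives of `x(z) = L⁻¹ arctanh z`:
`sup_{z ∈ [-1,1]} |P_ℓ(z)| ≤ ∏_{n=0}^{ℓ-1} (n² + 1)`. -/
theorem stmt10 (L : ℝ) (hL : 0 < L) (r : ℕ) (hr : 1 ≤ r) (P : ℕ → Polynomial ℝ)
    (hP1 : P 1 = 1)
    (hP : ∀ ℓ, 1 ≤ ℓ → ℓ ≤ r → ∀ z ∈ Set.Ioo (-1 : ℝ) 1,
      iteratedDeriv ℓ (fun t : ℝ => L⁻¹ * arctanh t) z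
        = L⁻¹ * ((1 - z ^ 2) ^ ℓ)⁻¹ * (P ℓ).eval z) :
    ∀ ℓ, 1 ≤ ℓ → ℓ ≤ r → ∀ z ∈ Set.Icc (-1 : ℝ) 1,
      |(P ℓ).eval z| ≤ ∏ n ∈ Finset.range ℓ, ((n : ℝ) ^ 2 + 1) := by
  intro ℓ hℓ hℓr z hz
  obtain ⟨n, rfl⟩ : ∃ n, ℓ = n + 1 := ⟨ℓ - 1, by omega⟩
  -- The bound is a closed condition, so it suffices to prove it on the open interval.
  rw [← closure_Ioo (by norm_num : (-1 : ℝ) ≠ 1)] at hz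
  refine le_on_closure (f := fun z => |(P (n + 1)).eval z|) (g := fun _ => _) ?_
    (by fun_prop) (by fun_prop) hz
  intro z hz
  have h := hP (n + 1) hℓ hℓr z hz
  rw [iteratedDeriv_arctanh L n z hz, mul_assoc] at h
  have h := mul_left_cancel₀ (inv_ne_zero hL.ne') h
  obtain ⟨hz1, hz2⟩ := hz
  have h1 : 0 < 1 + z := by linarith
  have h2 : 0 < 1 - z := by linarith
  have hform : (P (n + 1)).eval z
      = n.factorial / 2 * ((-1) ^ n * (1 - z) ^ (n + 1) + (1 + z) ^ (n + 1)) := by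
    rw [show 1 - z ^ 2 = (1 + z) * (1 - z) by ring, mul_pow] at h
    field_simp at h
    linarith
  have hpow := pow_add_pow_le h2.le h1.le (Nat.succ_ne_zero n)
  have habs : |(-1) ^ n * (1 - z) ^ (n + 1) + (1 + z) ^ (n + 1)| ≤ 2 ^ (n + 1) := by
    refine (abs_add_le _ _).trans ?_
    rw [abs_mul, abs_pow, abs_neg, abs_one, one_pow, one_mul, abs_of_pos (pow_pos h2 _),
      abs_of_pos (pow_pos h1 _)]
    refine hpow.trans_eq ?_
    congr 1
    ring
  refine le_trans ?_ (factorial_mul_two_pow_le n)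
  simp only [hform]
  rw [abs_mul, abs_of_nonneg (by positivity)]
  calc (n.factorial : ℝ) / 2 * _ ≤ n.factorial / 2 * 2 ^ (n + 1) := by gcongr
    _ = _ := by ring
end
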